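/- Let ρ be a three-qubit density matrix (positive semidefinite 8×8 complex matrix of trace 1, indexed by {0,1}^3), with one- and two-qubit reduced states ρ_1, ρ_2, ρ_3, ρ_{12}, ρ_{13}, ρ_{23} viewed as operators on ℂ^8, and let Δ = 1 − ρ_1 − ρ_2 − ρ_3 + ρ_{12} + ρ_{13} + ρ_{23}. Let τ : ℂ^8 → ℂ^8 be the antiunitary map (τc)_{αβγ} = (−1)^{α+β+γ} · conj(c_{1−α, 1−β, 1−γ}). Then for every Ψ ∈ ℂ^8, ⟨Ψ, ΔΨ⟩ = ⟨Ψ, ρΨ⟩ + ⟨τΨ, ρ(τΨ)⟩. -/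

import Mathlib

open scoped Matrix ComplexOrder

/-- The reduced state `ρ_A` of an `n`-qubit state `ρ`, viewed as an operator on
`(ℂ²)^{⊗n}`: `ρ_A[x,y] = (Π_{j∉A} δ_{x_j,y_j}) · Σ_w ρ[u(x,w), u(y,w)]`, where `w`
ranges over assignments of values to the coordinates outside `A` and `u(x,w)` agrees
with `x` on `A` and with `w` outside `A`. -/
noncomputable def qreduce {n : ℕ} (A : Finset (Fin n))
    (ρ : Matrix (Fin n → Bool) (Fin n → Bool) ℂ) :
    Matrix (Fin n → Bool) (Fin n → Bool) ℂ :=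
  Matrix.of fun x y =>
    (if ∀ j, j ∉ A → x j = y j then (1 : ℂ) else 0) *
      ∑ w ∈ Finset.univ.filter (fun w : Fin n → Bool => ∀ i, i ∈ A → w i = x i),
        ρ w (fun i => if i ∈ A then y i else w i)

/-- The three-qubit "universal NOT" map
`(τc)_{αβγ} = (-1)^{α+β+γ} conj(c_{ᾱβ̄γ̄})`. -/
noncomputable def tau3 (c : (Fin 3 → Bool) → ℂ) : (Fin 3 → Bool) → ℂ :=
  fun x =>
    (-1 : ℂ) ^ (((if x 0 then 1 else 0) + (if x 1 then 1 else 0) + (if x 2 then 1 else 0) : ℕ)) *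
      (starRingEnd ℂ) (c fun i => !(x i))

lemma sum_bool3 {M : Type*} [AddCommMonoid M] (f : (Fin 3 → Bool) → M) :
    ∑ w, f w = ∑ a, ∑ b, ∑ c, f ![a, b, c] := by
  rw [← (Fin.consEquiv (fun _ : Fin 3 => Bool)).sum_comp, Fintype.sum_prod_type]
  refine Finset.sum_congr rfl fun a _ => ?_
  rw [← (Fin.consEquiv (fun _ : Fin 2 => Bool)).sum_comp, Fintype.sum_prod_type]
  refine Finset.sum_congr rfl fun b _ => ?_
  rw [← (Fin.consEquiv (fun _ : Fin 1 => Bool)).sum_comp, Fintype.sum_prod_type]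
  refine Finset.sum_congr rfl fun c _ => ?_
  rw [Fintype.sum_unique]
  congr 1

lemma eta3 (g : Fin 3 → Bool) : g = ![g 0, g 1, g 2] := by
  ext i
  fin_cases i <;> rfl

lemma qreduce3 (A : Finset (Fin 3)) (ρ : Matrix (Fin 3 → Bool) (Fin 3 → Bool) ℂ)
    (x y : Fin 3 → Bool) : qreduce A ρ x y =
    (if (0 ∉ A → x 0 = y 0) ∧ (1 ∉ A → x 1 = y 1) ∧ (2 ∉ A → x 2 = y 2) then (1 : ℂ) else 0) *
      ∑ a, ∑ b, ∑ c, if (0 ∈ A → a = x 0) ∧ (1 ∈ A → b = x 1) ∧ (2 ∈ A → c = x 2) then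
        ρ ![a, b, c] ![if 0 ∈ A then y 0 else a, if 1 ∈ A then y 1 else b,
          if 2 ∈ A then y 2 else c] else 0 := by
  unfold qreduce
  rw [Matrix.of_apply, Finset.sum_filter, sum_bool3]
  simp only [Fin.forall_fin_succ, Fin.forall_fin_zero_pi, IsEmpty.forall_iff, and_true]
  congr 1
  refine Finset.sum_congr rfl fun a _ => Finset.sum_congr rfl fun b _ =>
    Finset.sum_congr rfl fun c _ => ?_
  rw [eta3 (fun i => if i ∈ A then y i else ![a, b, c] i)]
  rfl

noncomputable def sgn3 (x : Fin 3 → Bool) : ℂ :=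
  (-1 : ℂ) ^ (((if x 0 then 1 else 0) + (if x 1 then 1 else 0) + (if x 2 then 1 else 0) : ℕ))

lemma sgn3_mul (x y : Fin 3 → Bool) :
    sgn3 (fun i => !(x i)) * sgn3 (fun i => !(y i)) = sgn3 x * sgn3 y := by
  have h : ∀ z : Fin 3 → Bool, sgn3 (fun i => !(z i)) = - sgn3 z := by
    intro z
    simp only [sgn3]
    rcases Bool.eq_false_or_eq_true (z 0) with h0 | h0 <;>
    rcases Bool.eq_false_or_eq_true (z 1) with h1 | h1 <;>
    rcases Bool.eq_false_or_eq_true (z 2) with h2 | h2 <;>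
    simp [h0, h1, h2] <;> norm_num
  rw [h, h, neg_mul_neg]

lemma entry (ρ : Matrix (Fin 3 → Bool) (Fin 3 → Bool) ℂ) (htr : ρ.trace = 1)
    (x y : Fin 3 → Bool) :
    (1 - qreduce {0} ρ - qreduce {1} ρ - qreduce {2} ρ
        + qreduce {0, 1} ρ + qreduce {0, 2} ρ + qreduce {1, 2} ρ) x y
      = ρ x y + sgn3 x * sgn3 y * ρ (fun i => !(y i)) (fun i => !(x i)) := by
  have h1 : (1 : Matrix (Fin 3 → Bool) (Fin 3 → Bool) ℂ) x y =
      if x 0 = y 0 ∧ x 1 = y 1 ∧ x 2 = y 2 then ρ.trace else 0 := by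
    rw [Matrix.one_apply, htr]
    congr 1
    rw [funext_iff]
    simp [Fin.forall_fin_succ]
  simp only [Matrix.add_apply, Matrix.sub_apply, h1, qreduce3, Matrix.trace, Matrix.diag,
    sum_bool3 (fun w => ρ w w)]
  rw [eta3 (fun i => !(x i)), eta3 (fun i => !(y i))]
  have h2 : ρ x y = ρ ![x 0, x 1, x 2] ![y 0, y 1, y 2] := by rw [← eta3, ← eta3]
  rw [h2]
  unfold sgn3
  generalize x 0 = a
  generalize x 1 = b
  generalize x 2 = c
  generalize y 0 = d
  generalize y 1 = e
  generalize y 2 = f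
  cases a <;> cases b <;> cases c <;> cases d <;> cases e <;> cases f <;>
    simp [Fintype.sum_bool] <;> ring

def not3 : (Fin 3 → Bool) ≃ (Fin 3 → Bool) where
  toFun x := fun i => !(x i)
  invFun x := fun i => !(x i)
  left_inv x := by simp
  right_inv x := by simp

lemma sgn3_star (x : Fin 3 → Bool) : (starRingEnd ℂ) (sgn3 x) = sgn3 x := by
  simp [sgn3]

/-- equation (32) of the paper.  For a three-qubit density matrix `ρ`
with `Δ = 1 - ρ_1 - ρ_2 - ρ_3 + ρ_{12} + ρ_{13} + ρ_{23}` and the universal-NOT map `τ`,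
`⟨Ψ, ΔΨ⟩ = ⟨Ψ, ρΨ⟩ + ⟨τΨ, ρ(τΨ)⟩` for every `Ψ ∈ ℂ⁸`. -/
theorem stmt_12 (ρ : Matrix (Fin 3 → Bool) (Fin 3 → Bool) ℂ)
    (hpsd : ρ.PosSemidef) (htr : ρ.trace = 1)
    (Δ : Matrix (Fin 3 → Bool) (Fin 3 → Bool) ℂ)
    (hΔ : Δ = 1 - qreduce {0} ρ - qreduce {1} ρ - qreduce {2} ρ
        + qreduce {0, 1} ρ + qreduce {0, 2} ρ + qreduce {1, 2} ρ)
    (Ψ : (Fin 3 → Bool) → ℂ) :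
    star Ψ ⬝ᵥ Δ.mulVec Ψ
      = star Ψ ⬝ᵥ ρ.mulVec Ψ + star (tau3 Ψ) ⬝ᵥ ρ.mulVec (tau3 Ψ) := by
  have hτ : star (tau3 Ψ) ⬝ᵥ ρ.mulVec (tau3 Ψ) = ∑ x, ∑ y, star (Ψ x) *
      (sgn3 x * sgn3 y * ρ (fun i => !(y i)) (fun i => !(x i)) * Ψ y) := by
    simp only [dotProduct, Matrix.mulVec, Finset.mul_sum]
    rw [Finset.sum_comm, ← not3.sum_comp]
    refine Finset.sum_congr rfl fun x _ => ?_
    rw [← not3.sum_comp]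
    refine Finset.sum_congr rfl fun y _ => ?_
    have ht : ∀ z, tau3 Ψ (not3 z) = sgn3 (fun i => !(z i)) * (starRingEnd ℂ) (Ψ z) := by
      intro z
      simp [tau3, sgn3, not3]
    rw [Pi.star_apply, ht, ht, ← sgn3_mul x y]
    change (starRingEnd ℂ) _ * (ρ (fun i => !(y i)) (fun i => !(x i)) * _) =
      (starRingEnd ℂ) _ * _
    rw [map_mul, sgn3_star, Complex.conj_conj]
    ring
  rw [hτ]
  simp only [dotProduct, Matrix.mulVec, Finset.mul_sum, ← Finset.sum_add_distrib]
  refine Finset.sum_congr rfl fun x _ => Finset.sum_congr rfl fun y _ => ?_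
  rw [hΔ, entry ρ htr, Pi.star_apply]
  ring
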